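/- arXiv:1104.1884 — 2 statements merged into one kernel-verified Lean document; each statement's English description precedes it below -/
import Mathlib

section
/- Let f : ℕ → (0,∞) be non-decreasing, let K > 0 satisfy f(x+y) ≤ K·f(x)·f(y) for all positive integers x, y, and extend f by setting f(0) := 1/K (so that f(x+y) ≤ K·f(x)·f(y) holds for all integers x, y ≥ 0). Let U^(1), ..., U^(m) be i.i.d. random variables taking values in {1, 2, 3, ...} and let A be a positive integer. Then E f(U^(1) + ... + U^(m)) ≤ f(A·m) · ( K · E f(U^(1)·𝟙{U^(1) > A}) )^m. -/
/-!
The idea is to replace the summands one at a time. The hypotheses force `f` to be monotone on all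
of `ℕ` (`f 1 ≤ f 2 ≤ K f(1)²` gives `f 0 = 1/K ≤ f 1`) and submultiplicative up to `K` on all of
`ℕ`. Hence, writing `V = U·𝟙{U > A}`, the pointwise bound `f (c + U) ≤ f (c + A) · (K f(V))` holds
for every shift `c`: if `U ≤ A` the last factor is `1`, and otherwise
`f (c + U) ≤ K f(c) f(U)`. Keeping the shift `c` free, induction on `m` gives
`E f (c + U₁ + ⋯ + U_m) ≤ f (c + A m) (K E f(V))^m`, and `c = 0` is the claim.
-/

open Filter
open scoped ENNReal

namespace MCPaper

/-- convolution of two probability mass functions on `ℕ`: the law of the sum of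
independent random variables with laws `p` and `q`. -/
noncomputable def conv (p q : ℕ → ℝ≥0∞) (n : ℕ) : ℝ≥0∞ :=
  ∑ k ∈ Finset.range (n + 1), p k * q (n - k)

/-- `convPow p m` is the `m`-fold convolution power of `p`: the law of the sum of `m`
i.i.d. random variables with law `p` (the Dirac mass at `0` for `m = 0`). -/
noncomputable def convPow (p : ℕ → ℝ≥0∞) : ℕ → ℕ → ℝ≥0∞
  | 0 => fun n => if n = 0 then 1 else 0
  | m + 1 => conv (convPow p m) p

/-- Expectation of `h` under the law of a sum of two independent variables, as an iterated sum. -/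
theorem tsum_mul_conv (h p q : ℕ → ℝ≥0∞) :
    ∑' n, h n * conv p q n = ∑' j, (∑' k, h (k + j) * p k) * q j := by
  have h1 : ∀ n, h n * conv p q n
      = ∑' x : Finset.HasAntidiagonal.antidiagonal n, h (x.1.1 + x.1.2) * p x.1.1 * q x.1.2 := by
    intro n
    rw [tsum_fintype, Finset.sum_coe_sort (Finset.HasAntidiagonal.antidiagonal n)
      (fun x => h (x.1 + x.2) * p x.1 * q x.2), conv, Finset.mul_sum,
      Finset.Nat.sum_antidiagonal_eq_sum_range_succ (fun a b => h (a + b) * p a * q b)]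
    refine Finset.sum_congr rfl fun k hk => ?_
    have hk' : k ≤ n := by simpa [Nat.lt_succ_iff] using hk
    rw [Nat.add_sub_cancel' hk', mul_assoc]
  simp_rw [h1]
  rw [← ENNReal.tsum_sigma' (fun x : Σ n : ℕ, Finset.HasAntidiagonal.antidiagonal n =>
      h (x.2.1.1 + x.2.1.2) * p x.2.1.1 * q x.2.1.2)]
  refine ((Finset.HasAntidiagonal.sigmaAntidiagonalEquivProd (A := ℕ)).tsum_eq
      (fun x : ℕ × ℕ => h (x.1 + x.2) * p x.1 * q x.2)).trans ?_
  rw [ENNReal.tsum_prod (f := fun a b => h (a + b) * p a * q b), ENNReal.tsum_comm]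
  simp_rw [ENNReal.tsum_mul_right]

/-- The inductive form of the bound, with a free shift `c`: it only needs the one-variable
estimate `hstep`, in which `w j` bounds the cost of replacing a summand `j` by `A`. -/
theorem tsum_shift_le (g w u : ℕ → ℝ≥0∞) (A : ℕ)
    (hstep : ∀ c j, g (c + j) ≤ g (c + A) * w j) (m : ℕ) :
    ∀ c, ∑' n, g (c + n) * convPow u m n ≤ g (c + A * m) * (∑' j, w j * u j) ^ m := by
  induction m with
  | zero =>
    intro c
    rw [tsum_eq_single 0 (by intro n hn; simp [convPow, hn])]
    simp [convPow]
  | succ m ih =>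
    intro c
    set M := ∑' j, w j * u j with hM
    calc ∑' n, g (c + n) * convPow u (m + 1) n
        = ∑' j, (∑' k, g (c + (k + j)) * convPow u m k) * u j :=
          tsum_mul_conv (fun n => g (c + n)) _ _
      _ ≤ ∑' j, (g (c + A * (m + 1)) * M ^ m) * (w j * u j) := by
          refine ENNReal.tsum_le_tsum fun j => ?_
          have e1 : ∑' k, g (c + (k + j)) * convPow u m k ≤ g (c + j + A * m) * M ^ m := by
            refine le_of_eq_of_le (tsum_congr fun k => ?_) (ih (c + j))
            rw [show c + (k + j) = c + j + k by ring]
          have e2 : g (c + j + A * m) ≤ g (c + A * (m + 1)) * w j := by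
            have := hstep (c + A * m) j
            rwa [show c + A * m + j = c + j + A * m by ring,
              show c + A * m + A = c + A * (m + 1) by ring] at this
          calc _ ≤ g (c + j + A * m) * M ^ m * u j := by gcongr
            _ ≤ g (c + A * (m + 1)) * w j * M ^ m * u j := by gcongr
            _ = _ := by ring
      _ = g (c + A * (m + 1)) * M ^ (m + 1) := by
          rw [ENNReal.tsum_mul_left, ← hM, pow_succ, mul_assoc]

theorem stmt_12 (f : ℕ → ℝ) (K : ℝ) (hK : 0 < K)
    (hpos : ∀ n : ℕ, 0 < n → 0 < f n)
    (hmono : ∀ m n : ℕ, 0 < m → m ≤ n → f m ≤ f n)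
    (hsub : ∀ x y : ℕ, 0 < x → 0 < y → f (x + y) ≤ K * f x * f y)
    (hf0 : f 0 = 1 / K)
    (u : ℕ → ℝ≥0∞) (hu0 : u 0 = 0) (husum : ∑' n : ℕ, u n = 1)
    (m A : ℕ) (hA : 0 < A) :
    (∑' n : ℕ, ENNReal.ofReal (f n) * convPow u m n) ≤
      ENNReal.ofReal (f (A * m)) *
        (ENNReal.ofReal K *
          ∑' n : ℕ, ENNReal.ofReal (f (if A < n then n else 0)) * u n) ^ m := by
  have h01 : f 0 ≤ f 1 := by
    have h1 := hpos 1 one_pos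
    have h2 := (hmono 1 2 one_pos (by norm_num)).trans (hsub 1 1 one_pos one_pos)
    have h3 : 1 ≤ f 1 * K := by
      by_contra hlt
      nlinarith
    rw [hf0, div_le_iff₀ hK]
    exact h3
  have hmono' : ∀ a b, a ≤ b → f a ≤ f b := by
    intro a b hab
    rcases Nat.eq_zero_or_pos a with rfl | ha
    · rcases Nat.eq_zero_or_pos b with rfl | hb
      · exact le_rfl
      · exact h01.trans (hmono 1 b one_pos hb)
    · exact hmono a b ha hab
  have hKf0 : K * f 0 = 1 := by rw [hf0]; field_simp
  have hnn : ∀ n, 0 ≤ f n := by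
    intro n
    have h0 : 0 ≤ f 0 := by rw [hf0]; positivity
    exact h0.trans (hmono' 0 n n.zero_le)
  have hsub' : ∀ c j, 0 < j → f (c + j) ≤ K * f c * f j := by
    intro c j hj
    rcases Nat.eq_zero_or_pos c with rfl | hc
    · rw [hKf0]; simp
    · exact hsub c j hc hj
  have hstep : ∀ c j, ENNReal.ofReal (f (c + j)) ≤ ENNReal.ofReal (f (c + A)) *
      (ENNReal.ofReal K * ENNReal.ofReal (f (if A < j then j else 0))) := by
    intro c j
    rw [← ENNReal.ofReal_mul hK.le, ← ENNReal.ofReal_mul (hnn _)]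
    refine ENNReal.ofReal_le_ofReal ?_
    split_ifs with hj
    · calc f (c + j) ≤ K * f c * f j := hsub' c j (by omega)
        _ = f c * (K * f j) := by ring
        _ ≤ f (c + A) * (K * f j) :=
          mul_le_mul_of_nonneg_right (hmono' _ _ (by omega)) (mul_nonneg hK.le (hnn j))
    · rw [hKf0, mul_one]
      exact hmono' _ _ (by omega)
  have key := tsum_shift_le (fun n => ENNReal.ofReal (f n)) _ u A hstep m 0
  simpa only [zero_add, mul_assoc, ENNReal.tsum_mul_left] using key

end MCPaper
end

section
/- Let f : ℕ → (0,∞) be non-decreasing with f(n) → ∞, and suppose that for every C > 0 there exist positive integers x, y with f(x + y) > C·f(x)·f(y). Then f does not belong to the class G; that is, there exists an irreducible recurrent discrete-time Markov chain on a countable state space and states i, j with E f(T_ii) < ∞ and E f(T_jj) = ∞. -/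
/-!
The counterexample is a renewal-type chain on `ℕ`. From `0` it jumps to `k` with probability
`q k > 0`; from a positive state it moves deterministically: `1 → 0`, `2 → 0`, and `k → k - 1`
for `k ≥ 3`. Thus an excursion from `0` that starts with a jump to `k ≥ 2` has length exactly
`k` and avoids state `1`, while the excursions through state `1` have length two.

The return time to `0` has a finite `f`-moment as soon as `∑ q k * f (max k 2) < ∞`. On the other
hand, a return to state `1` may consist of the step `1 → 0`, two independent excursions of lengths
`x, y ≥ 2`, and the step `0 → 1`, so
`E f(T_11) ≥ f (x + y + 2) * q x * q y * q 1` (`hit_one_lower`).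
The hypothesis provides pairs `(x k, y k)` with `f (x k + y k) ≥ 8 ^ k * f (x k) * f (y k)`. Taking
`q` of order at least `2⁻ᵏ / f` at `x k` and at `y k` keeps the first moment finite and gives
`E f(T_11) ≥ c * 8 ^ k * 4⁻ᵏ` for every `k` (`exists_law`).

Everything else follows from first-step analysis (`genSum_step`), applied to sums
`∑ G n * P_x (T = n)`. With `G = 1` it shows that every state is hit almost surely from every state
(`hit_all`), which gives both irreducibility and recurrence.
-/

open Filter
open scoped ENNReal

namespace MCPaper

variable {E : Type*}

open Classical in
/-- `hitAvoid P t a n x` is the probability that the chain with transition matrix `P`,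
started at `x`, is at `t` at time `n` while avoiding both `t` and `a` at times `1,…,n-1`.
For `t = a` this is the distribution of the first hitting time of `t`. -/
noncomputable def hitAvoid (P : E → E → ℝ≥0∞) (t a : E) : ℕ → E → ℝ≥0∞
  | 0, _ => 0
  | 1, x => P x t
  | n + 2, x => ∑' k : E, if k = t ∨ k = a then 0 else P x k * hitAvoid P t a (n + 1) k

/-- `firstHit P i j n = P_i(T_ij = n)`, the probability that the first hitting time of `j`
(first return time if `i = j`) starting from `i` equals `n`. -/
noncomputable def firstHit (P : E → E → ℝ≥0∞) (i j : E) (n : ℕ) : ℝ≥0∞ :=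
  hitAvoid P j j n i

/-- `P` is a stochastic matrix. -/
def IsStochastic (P : E → E → ℝ≥0∞) : Prop := ∀ i, ∑' j : E, P i j = 1

/-- irreducibility: any state can be reached from any other state. -/
def IsIrreducible (P : E → E → ℝ≥0∞) : Prop := ∀ i j : E, ∃ n : ℕ, 0 < firstHit P i j n

/-- recurrence: `P_i(T_ii < ∞) = 1` for every state `i`. -/
def IsRecurrent (P : E → E → ℝ≥0∞) : Prop := ∀ i : E, ∑' n : ℕ, firstHit P i i n = 1

/-- the generalized moment `E f(T_ij)` of the first hitting time of `j` from `i`. -/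
noncomputable def momGen (f : ℕ → ℝ) (P : E → E → ℝ≥0∞) (i j : E) : ℝ≥0∞ :=
  ∑' n : ℕ, ENNReal.ofReal (f n) * firstHit P i j n

/-- the class `𝒢`: a finite generalized `f`-moment of the return time of one state implies
finiteness for the return times of all states, for every irreducible recurrent chain. -/
def MemG (f : ℕ → ℝ) : Prop :=
  ∀ (S : Type) [Countable S] (P : S → S → ℝ≥0∞),
    IsStochastic P → IsIrreducible P → IsRecurrent P →
      ∀ i : S, momGen f P i i < ⊤ → ∀ j : S, momGen f P j j < ⊤

/-- the class `ℋ`: finiteness of `E f(T_ij)` and `E f(T_ji)` for a pair of states implies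
finiteness of `E f(T_kl)` for all pairs, for every irreducible recurrent chain. -/
def MemH (f : ℕ → ℝ) : Prop :=
  ∀ (S : Type) [Countable S] (P : S → S → ℝ≥0∞),
    IsStochastic P → IsIrreducible P → IsRecurrent P →
      ∀ i j : S, momGen f P i j < ⊤ → momGen f P j i < ⊤ →
        ∀ k l : S, momGen f P k l < ⊤

/-! ### First-step analysis -/

/-- The generalized moment `∑ G n * P_x (T_xt = n)` of the hitting time of `t` from `x`, for a
weight `G` with values in `[0, ∞]`. -/
noncomputable def genSum (P : ℕ → ℕ → ℝ≥0∞) (t : ℕ) (G : ℕ → ℝ≥0∞) (x : ℕ) : ℝ≥0∞ :=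
  ∑' n : ℕ, G n * hitAvoid P t t n x

lemma genSum_step (P : ℕ → ℕ → ℝ≥0∞) (t : ℕ) (G : ℕ → ℝ≥0∞) (x : ℕ) :
    genSum P t G x
      = ∑' k : ℕ, P x k * (if k = t then G 1 else genSum P t (fun n => G (n + 1)) k) := by
  have h2 : ∀ k, genSum P t (fun n => G (n + 1)) k
      = ∑' n : ℕ, G (n + 2) * hitAvoid P t t (n + 1) k := by
    intro k
    rw [genSum, tsum_eq_zero_add' ENNReal.summable]
    simp [hitAvoid]
  rw [genSum, tsum_eq_zero_add' ENNReal.summable, tsum_eq_zero_add' ENNReal.summable]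
  have h3 : ∑' n : ℕ, G (n + 1 + 1) * hitAvoid P t t (n + 1 + 1) x
      = ∑' k : ℕ, if k = t then 0 else P x k * genSum P t (fun n => G (n + 1)) k := by
    simp only [hitAvoid, ← ENNReal.tsum_mul_left]
    rw [ENNReal.tsum_comm]
    refine tsum_congr fun k => ?_
    by_cases hk : k = t
    · simp [hk]
    · simp only [hk, or_self, if_false, h2, ← ENNReal.tsum_mul_left]
      refine tsum_congr fun n => ?_
      ring
  have h4 : ∑' k : ℕ, P x k * (if k = t then G 1 else genSum P t (fun n => G (n + 1)) k)
      = ∑' k : ℕ, ((if k = t then P x t * G 1 else 0)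
        + if k = t then 0 else P x k * genSum P t (fun n => G (n + 1)) k) := by
    refine tsum_congr fun k => ?_
    by_cases hk : k = t <;> simp [hk]
  rw [h3, h4, ENNReal.tsum_add, tsum_ite_eq]
  simp [hitAvoid, mul_comm]

lemma genSum_one_le (P : ℕ → ℕ → ℝ≥0∞) (hP : IsStochastic P) (t x : ℕ) :
    genSum P t (fun _ => 1) x ≤ 1 := by
  have key : ∀ N x, genSum P t (fun n => if n < N then 1 else 0) x ≤ 1 := by
    intro N
    induction N with
    | zero => intro x; simp [genSum]
    | succ N ih =>
      intro x
      rw [genSum_step]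
      refine le_trans ?_ (hP x).le
      refine ENNReal.tsum_le_tsum fun k => ?_
      refine (mul_le_mul_right ?_ _).trans (mul_one _).le
      split_ifs
      · exact le_rfl
      · simp
      · simpa using ih k
  refine ENNReal.tsum_le_of_sum_range_le fun N => ?_
  refine le_trans ?_ (key N x)
  refine le_trans (Finset.sum_le_sum fun n hn => ?_) (ENNReal.sum_le_tsum (Finset.range N))
  simp [Finset.mem_range.1 hn]

/-! ### The chain -/

/-- The successor of a positive state; the value at `0` is not used. -/
def next (x : ℕ) : ℕ := if x = 2 then 0 else x - 1

/-- The transition matrix: from `0` jump according to `q`, from `x > 0` move to `next x`. -/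
noncomputable def chain (q : ℕ → ℝ≥0∞) (x y : ℕ) : ℝ≥0∞ :=
  if x = 0 then q y else if y = next x then 1 else 0

lemma next_lt {x : ℕ} (hx : x ≠ 0) : next x < x := by
  unfold next; split_ifs <;> omega

lemma chain_stochastic {q : ℕ → ℝ≥0∞} (hq : ∑' n, q n = 1) : IsStochastic (chain q) := by
  intro i
  by_cases hi : i = 0
  · simp [chain, hi, hq]
  · simp [chain, hi]

lemma genSum_chain_zero (q : ℕ → ℝ≥0∞) (t : ℕ) (G : ℕ → ℝ≥0∞) :
    genSum (chain q) t G 0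
      = ∑' k : ℕ, q k * (if k = t then G 1 else genSum (chain q) t (fun n => G (n + 1)) k) := by
  rw [genSum_step]; simp [chain]

lemma genSum_chain_pos (q : ℕ → ℝ≥0∞) (t : ℕ) (G : ℕ → ℝ≥0∞) {x : ℕ} (hx : x ≠ 0) :
    genSum (chain q) t G x
      = if next x = t then G 1 else genSum (chain q) t (fun n => G (n + 1)) (next x) := by
  rw [genSum_step]
  simp only [chain, hx, if_false, ite_mul, one_mul, zero_mul]
  rw [tsum_ite_eq]

/-- Every state is hit almost surely from every state. The positive states lead to `0` or to the
target, so their hitting probability is at least the one from `0`, called `a`; the first step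
from `0` then gives `a ≥ q t + (1 - q t) * a`, whence `a = 1`. -/
lemma hit_all {q : ℕ → ℝ≥0∞} (hq : ∑' n, q n = 1) (hpos : ∀ n, q n ≠ 0) (t x : ℕ) :
    genSum (chain q) t (fun _ => 1) x = 1 := by
  have hle := genSum_one_le (chain q) (chain_stochastic hq) t
  set h : ℕ → ℝ≥0∞ := genSum (chain q) t (fun _ => 1) with hh
  have hge : ∀ x, h 0 ≤ h x := by
    intro x
    induction x using Nat.strong_induction_on with
    | _ x ih =>
      by_cases hx : x = 0
      · rw [hx]
      · have := genSum_chain_pos q t (fun _ => 1) hx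
        rw [← hh] at this
        rw [this]
        split_ifs
        · exact hle 0
        · exact ih _ (next_lt hx)
  have hb : q t + ∑' k, (if k = t then 0 else q k) = 1 := by
    convert (ENNReal.tsum_eq_add_tsum_ite t).symm.trans hq
  set b := ∑' k, (if k = t then 0 else q k) with hbdef
  have h0 : q t + b * h 0 ≤ h 0 := by
    conv_rhs => rw [hh, genSum_chain_zero, ENNReal.tsum_eq_add_tsum_ite t]
    rw [hbdef, ← ENNReal.tsum_mul_right]
    simp only [if_true, mul_one]
    gcongr with k
    split_ifs with hk
    · simp
    · gcongr
      exact hge k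
  have h1 : 1 ≤ h 0 := by
    have hqt : q t ≠ ⊤ := fun hc => by simp [hc] at hb
    have hbt : b ≠ ⊤ := fun hc => by simp [hc] at hb
    have hat : h 0 ≠ ⊤ := ne_top_of_le_ne_top ENNReal.one_ne_top (hle 0)
    have hqp := ENNReal.toReal_pos (hpos t) hqt
    have e1 := congrArg ENNReal.toReal hb
    have e2 := ENNReal.toReal_mono hat h0
    rw [ENNReal.toReal_add hqt hbt, ENNReal.toReal_one] at e1
    rw [ENNReal.toReal_add hqt (ENNReal.mul_ne_top hbt hat), ENNReal.toReal_mul] at e2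
    rw [← ENNReal.ofReal_toReal hat, ENNReal.one_le_ofReal]
    by_contra hc
    push Not at hc
    nlinarith [mul_pos hqp (sub_pos.2 hc)]
  exact le_antisymm (hle x) (h1.trans (hge x))

lemma chain_recurrent {q : ℕ → ℝ≥0∞} (hq : ∑' n, q n = 1) (hpos : ∀ n, q n ≠ 0) :
    IsRecurrent (chain q) := by
  intro i
  simpa [genSum, firstHit] using hit_all hq hpos i i

lemma chain_irreducible {q : ℕ → ℝ≥0∞} (hq : ∑' n, q n = 1) (hpos : ∀ n, q n ≠ 0) :
    IsIrreducible (chain q) := by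
  intro i j
  by_contra! hc
  have h := hit_all hq hpos j i
  have h0 : ∀ n, hitAvoid (chain q) j j n i = 0 := fun n => le_antisymm (hc n) bot_le
  simp [genSum, h0] at h

/-! ### Moments of the return times to `0` and to `1` -/

/-- The time needed to go down from `x > 0` to `0` is `max (x - 1) 1`. -/
lemma genSum_down (q : ℕ → ℝ≥0∞) (x : ℕ) (hx : x ≠ 0) (G : ℕ → ℝ≥0∞) :
    genSum (chain q) 0 G x = G (max (x - 1) 1) := by
  induction x using Nat.strong_induction_on generalizing G with
  | _ x ih =>
    rw [genSum_chain_pos q 0 G hx]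
    split_ifs with h0
    · congr 1
      unfold next at h0
      split_ifs at h0 <;> omega
    · rw [ih _ (next_lt hx) h0]
      congr 1
      unfold next at *
      split_ifs at * <;> omega

lemma genSum_return_zero (q G : ℕ → ℝ≥0∞) (hG : Monotone G) :
    genSum (chain q) 0 G 0 ≤ ∑' k, q k * G (max k 2) := by
  rw [genSum_chain_zero]
  gcongr with k
  split_ifs with hk
  · exact hG (by omega)
  · rw [genSum_down q k hk]
    exact hG (by omega)

lemma hit_succ_zero (q : ℕ → ℝ≥0∞) {n x : ℕ} (hn : n ≠ 0) (hx : x ≠ 1) :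
    q x * hitAvoid (chain q) 1 1 n x ≤ hitAvoid (chain q) 1 1 (n + 1) 0 := by
  obtain ⟨m, rfl⟩ := Nat.exists_eq_succ_of_ne_zero hn
  have := ENNReal.le_tsum (f := fun k : ℕ => if k = 1 ∨ k = 1 then 0
    else chain q 0 k * hitAvoid (chain q) 1 1 (m + 1) k) x
  simp only [hx, or_self, if_false] at this
  simpa [hitAvoid, chain] using this

lemma hit_succ_pos (q : ℕ → ℝ≥0∞) {n x : ℕ} (hn : n ≠ 0) (hx : x ≠ 0) (hx1 : next x ≠ 1) :
    hitAvoid (chain q) 1 1 n (next x) ≤ hitAvoid (chain q) 1 1 (n + 1) x := by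
  obtain ⟨m, rfl⟩ := Nat.exists_eq_succ_of_ne_zero hn
  have := ENNReal.le_tsum (f := fun k : ℕ => if k = 1 ∨ k = 1 then 0
    else chain q x k * hitAvoid (chain q) 1 1 (m + 1) k) (next x)
  simp only [hx1, or_self, if_false] at this
  simpa [hitAvoid, chain, hx] using this

lemma hit_down (q : ℕ → ℝ≥0∞) {n : ℕ} (hn : n ≠ 0) (m : ℕ) :
    hitAvoid (chain q) 1 1 n 0 ≤ hitAvoid (chain q) 1 1 (n + m + 1) (m + 2) := by
  induction m with
  | zero => simpa [next] using hit_succ_pos q (x := 2) hn (by simp) (by simp [next])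
  | succ m ih =>
    refine ih.trans ?_
    have := hit_succ_pos q (n := n + m + 1) (x := m + 3) (by simp) (by simp) (by simp [next])
    simpa [next, add_assoc] using this

/-- Prepending an excursion of length `x` through the state `x`. -/
lemma hit_excursion (q : ℕ → ℝ≥0∞) {n x : ℕ} (hn : n ≠ 0) (hx : 2 ≤ x) :
    q x * hitAvoid (chain q) 1 1 n 0 ≤ hitAvoid (chain q) 1 1 (n + x) 0 := by
  obtain ⟨m, rfl⟩ := Nat.exists_eq_add_of_le' hx
  exact (mul_le_mul_right (hit_down q hn m) _).trans
    (hit_succ_zero q (n := n + m + 1) (by simp) (by omega))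

lemma hit_one_lower (q : ℕ → ℝ≥0∞) {x y : ℕ} (hx : 2 ≤ x) (hy : 2 ≤ y) :
    q y * (q x * q 1) ≤ hitAvoid (chain q) 1 1 (x + y + 2) 1 := by
  have h1 : hitAvoid (chain q) 1 1 1 0 = q 1 := by simp [hitAvoid, chain]
  have h2 := hit_excursion q one_ne_zero hx
  rw [h1] at h2
  have h3 := hit_excursion q (n := 1 + x) (by omega) hy
  have h4 := hit_succ_pos q (n := 1 + x + y) (x := 1) (by omega) one_ne_zero (by simp [next])
  have e : 1 + x + y + 1 = x + y + 2 := by omega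
  rw [e] at h4
  exact ((mul_le_mul_right h2 _).trans h3).trans (by simpa [next] using h4)

/-! ### The jump law -/

/-- The failure of submultiplicativity can be witnessed by arguments at least `2`: raising an
argument `1` to `2` costs only the constant factor `f 2 / f 1`. -/
lemma exists_pair (f : ℕ → ℝ) (hpos : ∀ n, 0 < f n) (hmono : Monotone f)
    (hC : ∀ C : ℝ, 0 < C → ∃ x y : ℕ, 0 < x ∧ 0 < y ∧ C * f x * f y < f (x + y))
    (C : ℝ) (h0 : 0 < C) : ∃ x y : ℕ, 2 ≤ x ∧ 2 ≤ y ∧ C * f x * f y ≤ f (x + y) := by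
  set r := f 2 / f 1 with hr
  have hr0 : 0 < r := div_pos (hpos 2) (hpos 1)
  have hr1 : 1 ≤ r := (one_le_div (hpos 1)).2 (hmono (by norm_num))
  have key : ∀ x, 0 < x → f (max x 2) ≤ r * f x := by
    intro x hx
    rcases Nat.lt_or_ge x 2 with h | h
    · obtain rfl : x = 1 := by omega
      have := (hpos 1).ne'
      simp [hr, this]
    · rw [max_eq_left h]
      nlinarith [hpos x]
  obtain ⟨x, y, hx, hy, h⟩ := hC (C * r * r) (by positivity)
  refine ⟨max x 2, max y 2, le_max_right _ _, le_max_right _ _, ?_⟩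
  calc C * f (max x 2) * f (max y 2) ≤ C * (r * f x) * (r * f y) := by
        have := hpos x
        have := hpos (max y 2)
        gcongr
        · exact key x hx
        · exact key y hy
    _ = C * r * r * f x * f y := by ring
    _ ≤ f (x + y) := h.le
    _ ≤ f (max x 2 + max y 2) := hmono (by omega)

/-- The jump law is proportional to `v n / f (max n 2)` for a summable `v` with `v n > 0`
everywhere and `v ≥ 2⁻ᵏ` at `x k` and `y k`. -/
lemma exists_law (f : ℕ → ℝ) (hpos : ∀ n, 0 < f n) (hmono : Monotone f)
    (hC : ∀ C : ℝ, 0 < C → ∃ x y : ℕ, 0 < x ∧ 0 < y ∧ C * f x * f y < f (x + y)) :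
    ∃ q : ℕ → ℝ≥0∞, ∑' n, q n = 1 ∧ (∀ n, q n ≠ 0) ∧
      ∑' n, q n * ENNReal.ofReal (f (max n 2)) < ⊤ ∧
      ∃ c : ℝ≥0∞, c ≠ 0 ∧ ∀ k : ℕ, ∃ x y : ℕ, 2 ≤ x ∧ 2 ≤ y ∧
        c * 2 ^ k ≤ ENNReal.ofReal (f (x + y)) * (q y * (q x * q 1)) := by
  have hex := fun k : ℕ => exists_pair f hpos hmono hC (8 ^ k) (by positivity)
  choose x y hx hy hxy using hex
  set F : ℕ → ℝ≥0∞ := fun n => ENNReal.ofReal (f (max n 2)) with hF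
  have hF0 : ∀ n, F n ≠ 0 := fun n => (ENNReal.ofReal_pos.2 (hpos _)).ne'
  have hFt : ∀ n, F n ≠ ⊤ := fun n => ENNReal.ofReal_ne_top
  set v : ℕ → ℝ≥0∞ := fun n => 2⁻¹ ^ n
    + ∑' k, ((if n = x k then 2⁻¹ ^ k else 0) + (if n = y k then 2⁻¹ ^ k else 0)) with hv
  have hvsum : ∑' n, v n ≠ ⊤ := by
    simp only [hv]
    rw [ENNReal.tsum_add, ENNReal.tsum_comm]
    simp only [ENNReal.tsum_add, tsum_ite_eq, ENNReal.tsum_geometric_two]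
    norm_num
  have hv0 : ∀ n, v n ≠ 0 := by
    intro n h
    have : (2⁻¹ : ℝ≥0∞) ^ n ≠ 0 := pow_ne_zero _ (by simp)
    exact this (add_eq_zero.1 h).1
  have hvx : ∀ k, 2⁻¹ ^ k ≤ v (x k) := fun k => by
    refine le_trans ?_ le_add_self
    refine le_trans ?_ (ENNReal.le_tsum k)
    simp
  have hvy : ∀ k, 2⁻¹ ^ k ≤ v (y k) := fun k => by
    refine le_trans ?_ le_add_self
    refine le_trans ?_ (ENNReal.le_tsum k)
    simp
  set W := ∑' n, v n * (F n)⁻¹ with hW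
  have hW0 : W ≠ 0 := by
    intro h
    have := ENNReal.tsum_eq_zero.1 h 0
    simp [hv0, hFt] at this
  have hWt : W ≠ ⊤ := by
    refine ne_top_of_le_ne_top (ENNReal.mul_ne_top hvsum (ENNReal.inv_ne_top.2 (hF0 0))) ?_
    rw [hW, ← ENNReal.tsum_mul_right]
    gcongr with n
    exact ENNReal.ofReal_le_ofReal (hmono (by omega))
  have hWi0 : W⁻¹ ≠ 0 := ENNReal.inv_ne_zero.2 hWt
  have hq0 : ∀ n, v n * (F n)⁻¹ * W⁻¹ ≠ 0 := fun n =>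
    mul_ne_zero (mul_ne_zero (hv0 n) (ENNReal.inv_ne_zero.2 (hFt n))) hWi0
  refine ⟨fun n => v n * (F n)⁻¹ * W⁻¹, ?_, hq0, ?_,
    W⁻¹ * W⁻¹ * (v 1 * (F 1)⁻¹ * W⁻¹), mul_ne_zero (mul_ne_zero hWi0 hWi0) (hq0 1), ?_⟩
  · rw [ENNReal.tsum_mul_right]
    exact ENNReal.mul_inv_cancel hW0 hWt
  · have : ∀ n, v n * (F n)⁻¹ * W⁻¹ * F n = v n * W⁻¹ := fun n => by
      calc v n * (F n)⁻¹ * W⁻¹ * F n = v n * W⁻¹ * (F n * (F n)⁻¹) := by ring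
        _ = v n * W⁻¹ := by rw [ENNReal.mul_inv_cancel (hF0 n) (hFt n), mul_one]
    change ∑' n, v n * (F n)⁻¹ * W⁻¹ * F n < ⊤
    simp only [this, ENNReal.tsum_mul_right]
    exact (ENNReal.mul_ne_top hvsum (ENNReal.inv_ne_top.2 hW0)).lt_top
  · intro k
    refine ⟨x k, y k, hx k, hy k, ?_⟩
    have h8 : 8 ^ k * (F (x k) * F (y k)) ≤ ENNReal.ofReal (f (x k + y k)) := by
      simp only [hF, max_eq_left (hx k), max_eq_left (hy k)]
      refine le_trans (le_of_eq ?_) (ENNReal.ofReal_le_ofReal (hxy k))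
      rw [mul_assoc, ENNReal.ofReal_mul (by positivity), ENNReal.ofReal_mul (hpos _).le,
        ENNReal.ofReal_pow (by norm_num)]
      norm_num
    have h2 : (2 : ℝ≥0∞) ^ k = 8 ^ k * (2⁻¹ ^ k * 2⁻¹ ^ k) := by
      rw [← mul_pow, ← mul_pow]
      congr 1
      have h := ENNReal.mul_inv_cancel (a := 2) (by norm_num) (by norm_num)
      calc (2 : ℝ≥0∞) = 2 * (2 * 2⁻¹) * (2 * 2⁻¹) := by rw [h]; norm_num
        _ = 2 * 2 * 2 * (2⁻¹ * 2⁻¹) := by ring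
        _ = 8 * (2⁻¹ * 2⁻¹) := by norm_num
    set K := v 1 * (F 1)⁻¹ * W⁻¹
    calc W⁻¹ * W⁻¹ * K * 2 ^ k
        = W⁻¹ * W⁻¹ * K * (8 ^ k * (2⁻¹ ^ k * 2⁻¹ ^ k)) := by rw [h2]
      _ ≤ W⁻¹ * W⁻¹ * K * (8 ^ k * (v (x k) * v (y k))) := by
          gcongr
          · exact hvx k
          · exact hvy k
      _ = W⁻¹ * W⁻¹ * K * (8 ^ k * (v (x k) * v (y k)))
            * ((F (x k) * (F (x k))⁻¹) * (F (y k) * (F (y k))⁻¹)) := by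
          rw [ENNReal.mul_inv_cancel (hF0 _) (hFt _), ENNReal.mul_inv_cancel (hF0 _) (hFt _),
            mul_one, mul_one]
      _ = 8 ^ k * (F (x k) * F (y k))
            * (v (y k) * (F (y k))⁻¹ * W⁻¹ * (v (x k) * (F (x k))⁻¹ * W⁻¹ * K)) := by ring
      _ ≤ _ := by gcongr

theorem stmt_17 (f : ℕ → ℝ) (hpos : ∀ n, 0 < f n) (hmono : Monotone f)
    (htop : Tendsto f atTop atTop)
    (hC : ∀ C : ℝ, 0 < C → ∃ x y : ℕ, 0 < x ∧ 0 < y ∧ C * f x * f y < f (x + y)) :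
    (∃ (S : Type) (_ : Countable S) (P : S → S → ℝ≥0∞) (i j : S),
        IsStochastic P ∧ IsIrreducible P ∧ IsRecurrent P ∧
          momGen f P i i < ⊤ ∧ momGen f P j j = ⊤) ∧
      ¬ MemG f := by
  obtain ⟨q, hq, hq0, hfin, c, hc, hlow⟩ := exists_law f hpos hmono hC
  have h0 : momGen f (chain q) 0 0 < ⊤ :=
    (genSum_return_zero q (fun n => ENNReal.ofReal (f n))
      (fun _ _ h => ENNReal.ofReal_le_ofReal (hmono h))).trans_lt hfin
  have h1 : momGen f (chain q) 1 1 = ⊤ := by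
    have hk : ∀ k : ℕ, c * 2 ^ k ≤ momGen f (chain q) 1 1 := by
      intro k
      obtain ⟨x, y, hx, hy, h⟩ := hlow k
      refine h.trans (le_trans ?_ (ENNReal.le_tsum (x + y + 2)))
      exact mul_le_mul' (ENNReal.ofReal_le_ofReal (hmono (by omega))) (hit_one_lower q hx hy)
    have hlim : Tendsto (fun k : ℕ => c * (2 : ℝ≥0∞) ^ k) atTop (nhds (c * ⊤)) :=
      ENNReal.Tendsto.const_mul
        (ENNReal.tendsto_pow_atTop_nhds_top_iff.2 (by norm_num)) (Or.inl (by simp))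
    rw [ENNReal.mul_top hc] at hlim
    exact top_le_iff.1 (le_of_tendsto' hlim hk)
  have hs := chain_stochastic hq
  have hi := chain_irreducible hq hq0
  have hr := chain_recurrent hq hq0
  exact ⟨⟨ℕ, inferInstance, chain q, 0, 1, hs, hi, hr, h0, h1⟩,
    fun hG => (hG ℕ (chain q) hs hi hr 0 h0 1).ne h1⟩

end MCPaper
end
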